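/- For every k ≥ 1, δ(h k) < 1 / 2^k, where δ(t) = lim_{j→∞} δ_j(t) is the limiting coding distance between the shift by t and the identity. -/

import Mathlib

open MeasureTheory Filter Topology
open scoped ENNReal

/-- `m`-fold concatenation of a word. -/
def wordPow (w : List ℕ) (m : ℕ) : List ℕ := (List.replicate m w).flatten

/-- The words of the generalized del Junco–Rudolph construction:
`B 0 = [0]`, `B (k+1) = (B k)^(a·b^k) ++ [1] ++ (B k)^((b-a)·b^k)`. -/
def Bword (b a : ℕ) : ℕ → List ℕ
  | 0 => [0]
  | k + 1 => wordPow (Bword b a k) (a * b ^ k) ++ [1] ++ wordPow (Bword b a k) ((b - a) * b ^ k)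

/-- The height sequence: `h 0 = 1`, `h (k+1) = b^(k+1) * h k + 1`. -/
def hseq (b : ℕ) : ℕ → ℕ
  | 0 => 1
  | k + 1 => b ^ (k + 1) * hseq b k + 1

/-- The coding distance `δ_k^(N)(t)` computed from the word `ξ^{N,k} = (B k)^N`. -/
noncomputable def deltaN (b a k t N : ℕ) : ℝ :=
  (1 / ((N * hseq b k : ℕ) : ℝ)) *
    ∑ i ∈ Finset.range (N * hseq b k),
      if i + t < N * hseq b k then
        |(((wordPow (Bword b a k) N).getD (i + t) 0 : ℕ) : ℝ) -
          (((wordPow (Bword b a k) N).getD i 0 : ℕ) : ℝ)|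
      else 1

/-!
Every word `B j` with `j ≥ k` is built from copies of `B k` and spacers `1`. Shifting such a word
by the length `h k` of a block moves each block onto the next one, so that only the spacers cost
anything. Commuting one spacer past one block turns `B k ++ [1]` into `1 :: B k`, at a cost of
at most `2 (sum (B k) + 1) ≤ h k + 1`. Hence `δ_j (h k)` is at most `h k + 1` times the density in
`B j` of the spacers above level `k`. Both the number of these spacers and `h j` obey the recursion
`x (j + 1) = b ^ (j + 1) * x j + 1`, the former starting from `1` at level `k + 1`, so this density
stays below `4 / (3 h (k + 1))`.
-/

section WordDist

variable {α : Type*} [PseudoMetricSpace α]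

/-- The `ℓ¹` distance between two words, compared letter by letter up to the end of the shorter
one; for words over `{0, 1}` it counts the mismatches. -/
noncomputable def wordDist (u v : List α) : ℝ := (List.zipWith dist u v).sum

lemma wordDist_self (u : List α) : wordDist u u = 0 := by
  simp [wordDist, List.zipWith_self]

lemma wordDist_nonneg (u v : List α) : 0 ≤ wordDist u v := by
  refine List.sum_nonneg fun x hx => ?_
  obtain ⟨i, hi, rfl⟩ := List.mem_iff_getElem.mp hx
  simp

lemma wordDist_append {u v : List α} (huv : u.length = v.length) (u' v' : List α) :
    wordDist (u ++ u') (v ++ v') = wordDist u v + wordDist u' v' := by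
  simp [wordDist, List.zipWith_append huv]

lemma wordDist_triangle (u : List α) {v w : List α} (hwv : w.length ≤ v.length) :
    wordDist u w ≤ wordDist u v + wordDist v w := by
  induction u generalizing v w with
  | nil => simpa [wordDist] using wordDist_nonneg v w
  | cons x u ih =>
    match v, w with
    | v, [] => simpa [wordDist] using wordDist_nonneg (x :: u) v
    | y :: v, z :: w =>
      have huw := ih (v := v) (w := w) (by simpa using hwv)
      simp only [wordDist, List.zipWith_cons_cons, List.sum_cons] at huw ⊢
      linarith [dist_triangle x y z]

lemma wordDist_eq_sum_range (u v : List α) (x : α) :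
    wordDist u v =
      ∑ i ∈ Finset.range (min u.length v.length), dist (u.getD i x) (v.getD i x) := by
  induction u generalizing v with
  | nil => simp [wordDist]
  | cons y u ih =>
    cases v with
    | nil => simp [wordDist]
    | cons z v =>
      rw [List.length_cons, List.length_cons, Nat.add_min_add_right, Finset.sum_range_succ']
      simp only [List.getD_cons_succ, List.getD_cons_zero, ← ih v]
      simp [wordDist, add_comm]

lemma wordDist_drop_le {u v : List α} (h : v.length ≤ u.length) :
    wordDist (u.drop v.length) u ≤ wordDist u (v ++ u) := by
  have hsplit := wordDist_append (u := u.take v.length) (v := v) (by simpa) (u.drop v.length) u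
  rw [List.take_append_drop] at hsplit
  linarith [wordDist_nonneg (u.take v.length) v]

lemma sum_dist_shift_eq (u : List α) {t : ℕ} (ht : t ≤ u.length) (x : α) :
    (∑ i ∈ Finset.range u.length,
      if i + t < u.length then dist (u.getD (i + t) x) (u.getD i x) else 1) =
      wordDist (u.drop t) u + t := by
  obtain ⟨m, hm⟩ := Nat.exists_eq_add_of_le' ht
  rw [wordDist_eq_sum_range _ _ x, List.length_drop, hm, Nat.add_sub_cancel,
    min_eq_left (Nat.le_add_right m t), Finset.sum_range_add]
  congr 1
  · refine Finset.sum_congr rfl fun i hi => ?_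
    have : i < m := Finset.mem_range.mp hi
    simp [this, List.getD_eq_getElem?_getD, add_comm]
  · simp [add_right_comm]

end WordDist

lemma wordDist_le_sum_add_sum (u v : List ℕ) : wordDist u v ≤ u.sum + v.sum := by
  induction u generalizing v with
  | nil => simpa [wordDist] using Nat.cast_nonneg (α := ℝ) v.sum
  | cons x u ih =>
    cases v with
    | nil => simp only [wordDist, List.zipWith_nil_right, List.sum_nil]; positivity
    | cons y v =>
      have hxy : dist x y ≤ (x + y : ℝ) := by
        rw [Nat.dist_eq]
        simpa using abs_sub (x : ℝ) y
      have huv := ih v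
      simp only [wordDist, List.zipWith_cons_cons, List.sum_cons, Nat.cast_add] at huv ⊢
      linarith

section IsBuiltFrom

variable {α : Type*}

/-- `IsBuiltFrom B s n w` says that `w` is a concatenation of copies of the block `B` and exactly
`n` spacers `s`, in any order: the relation between the words of a rank-one construction. -/
inductive IsBuiltFrom (B : List α) (s : α) : ℕ → List α → Prop
  | nil : IsBuiltFrom B s 0 []
  | block {n : ℕ} {w : List α} : IsBuiltFrom B s n w → IsBuiltFrom B s n (B ++ w)
  | spacer {n : ℕ} {w : List α} : IsBuiltFrom B s n w → IsBuiltFrom B s (n + 1) (s :: w)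

namespace IsBuiltFrom

variable {B v w : List α} {s : α} {m n : ℕ}

lemma refl (B : List α) (s : α) : IsBuiltFrom B s 0 B := by
  simpa using nil.block (B := B) (s := s)

lemma append (hv : IsBuiltFrom B s m v) (hw : IsBuiltFrom B s n w) :
    IsBuiltFrom B s (m + n) (v ++ w) := by
  induction hv with
  | nil => simpa using hw
  | block _ ih => simpa using ih.block
  | spacer _ ih => simpa [add_right_comm] using ih.spacer

lemma pow {B w : List ℕ} {s : ℕ} (hw : IsBuiltFrom B s n w) (m : ℕ) :
    IsBuiltFrom B s (m * n) (wordPow w m) := by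
  induction m with
  | zero => simpa [wordPow] using nil
  | succ m ih =>
    simpa [wordPow, List.replicate_succ, add_mul, add_comm] using hw.append ih

lemma wordDist_append_le [PseudoMetricSpace α] (hw : IsBuiltFrom B s n w) :
    wordDist w (B ++ w) ≤ n * wordDist (s :: B) (B ++ [s]) := by
  induction hw with
  | nil => simp [wordDist]
  | block _ ih => rwa [wordDist_append rfl, wordDist_self, zero_add]
  | @spacer n w _ ih =>
    have hshift : wordDist (s :: w) (s :: (B ++ w)) = wordDist w (B ++ w) := by
      simp [wordDist]
    have hswap : wordDist (s :: (B ++ w)) (B ++ s :: w) = wordDist (s :: B) (B ++ [s]) := by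
      simpa [wordDist_self] using wordDist_append (u := s :: B) (v := B ++ [s]) (by simp) w w
    have htri : wordDist (s :: w) (B ++ s :: w) ≤
        wordDist (s :: w) (s :: (B ++ w)) + wordDist (s :: (B ++ w)) (B ++ s :: w) :=
      wordDist_triangle _ (by simp [add_assoc])
    push_cast
    linarith

end IsBuiltFrom

end IsBuiltFrom

lemma length_wordPow (w : List ℕ) (m : ℕ) : (wordPow w m).length = m * w.length := by
  simp [wordPow]

lemma sum_wordPow (w : List ℕ) (m : ℕ) : (wordPow w m).sum = m * w.sum := by
  simp [wordPow, List.sum_flatten]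

lemma hseq_pos (b k : ℕ) : 0 < hseq b k := by
  cases k <;> simp [hseq]

lemma pow_le_hseq (b k : ℕ) : b ^ k ≤ hseq b k := by
  cases k with
  | zero => simp [hseq]
  | succ k => exact (Nat.le_mul_of_pos_right _ (hseq_pos b k)).trans (Nat.le_succ _)

lemma hseq_mono {b : ℕ} (hb : 1 ≤ b) : Monotone (hseq b) :=
  monotone_nat_of_le_succ fun k =>
    (Nat.le_mul_of_pos_left _ (by positivity)).trans (Nat.le_succ _)

/-- The number of spacers in `B (k + n)` when it is viewed as built from copies of `B k`. -/
def spacerCount (b k : ℕ) : ℕ → ℕ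
  | 0 => 0
  | n + 1 => b ^ (k + n + 1) * spacerCount b k n + 1

-- The factor `4` is `3 * (1 + 1/4 + 1/4^2 + ⋯)`, as each level above `k + 1` has
-- at least four times as many blocks as the preceding one.
lemma spacerCount_mul_hseq_le {b : ℕ} (hb : 2 ≤ b) (k n : ℕ) :
    (3 * spacerCount b k (n + 1) + 1) * hseq b (k + 1) ≤ 4 * hseq b (k + (n + 1)) := by
  induction n with
  | zero => simp [spacerCount]
  | succ n ih =>
    set p := spacerCount b k (n + 1)
    set c := b ^ (k + (n + 1) + 1)
    have hc : 4 ≤ c :=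
      calc 4 = 2 ^ 2 := by norm_num
        _ ≤ b ^ 2 := Nat.pow_le_pow_left hb 2
        _ ≤ c := Nat.pow_le_pow_right (by omega) (by omega)
    calc (3 * (c * p + 1) + 1) * hseq b (k + 1)
        = (c * (3 * p) + 4) * hseq b (k + 1) := by ring
      _ ≤ (c * (3 * p) + c) * hseq b (k + 1) := by gcongr
      _ = c * ((3 * p + 1) * hseq b (k + 1)) := by ring
      _ ≤ c * (4 * hseq b (k + (n + 1))) := by gcongr
      _ ≤ 4 * (c * hseq b (k + (n + 1)) + 1) := by linarith

section Bword

variable {a b : ℕ}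

lemma mul_pow_add_sub_mul_pow (ha : a ≤ b) (k : ℕ) :
    a * b ^ k + (b - a) * b ^ k = b ^ (k + 1) := by
  rw [← add_mul, Nat.add_sub_cancel' ha, pow_succ']

lemma length_Bword (ha : a ≤ b) (k : ℕ) : (Bword b a k).length = hseq b k := by
  induction k with
  | zero => simp [Bword, hseq]
  | succ k ih =>
    simp only [Bword, hseq, List.length_append, length_wordPow, ih,
      ← mul_pow_add_sub_mul_pow ha k, List.length_singleton]
    ring

lemma sum_Bword_succ (ha : a ≤ b) (k : ℕ) :
    (Bword b a (k + 1)).sum = b ^ (k + 1) * (Bword b a k).sum + 1 := by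
  simp only [Bword, List.sum_append, sum_wordPow, ← mul_pow_add_sub_mul_pow ha k,
    List.sum_singleton]
  ring

lemma two_mul_sum_Bword_lt (hb : 2 ≤ b) (ha : a ≤ b) (k : ℕ) :
    2 * (Bword b a k).sum < hseq b k := by
  induction k with
  | zero => simp [Bword, hseq]
  | succ k ih =>
    have hpow : 2 ≤ b ^ (k + 1) := hb.trans (Nat.le_self_pow k.succ_ne_zero b)
    rw [sum_Bword_succ ha, hseq]
    nlinarith [Nat.mul_le_mul_left (b ^ (k + 1)) (Nat.succ_le_of_lt ih)]

lemma IsBuiltFrom.Bword_succ (ha : a ≤ b) {B : List ℕ} {n j : ℕ}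
    (h : IsBuiltFrom B 1 n (Bword b a j)) :
    IsBuiltFrom B 1 (b ^ (j + 1) * n + 1) (Bword b a (j + 1)) := by
  have hn : b ^ (j + 1) * n + 1 = a * b ^ j * n + (0 + 1) + (b - a) * b ^ j * n := by
    rw [← mul_pow_add_sub_mul_pow ha j]
    ring
  exact hn ▸ ((h.pow _).append nil.spacer).append (h.pow _)

lemma isBuiltFrom_Bword (ha : a ≤ b) (k n : ℕ) :
    IsBuiltFrom (Bword b a k) 1 (spacerCount b k n) (Bword b a (k + n)) := by
  induction n with
  | zero => exact .refl _ _
  | succ n ih => exact ih.Bword_succ ha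

lemma wordDist_cons_Bword_le (hb : 2 ≤ b) (ha : a ≤ b) (k : ℕ) :
    wordDist (1 :: Bword b a k) (Bword b a k ++ [1]) ≤ hseq b k + 1 := by
  refine (wordDist_le_sum_add_sum _ _).trans ?_
  have := two_mul_sum_Bword_lt hb ha k
  norm_cast
  simp only [List.sum_cons, List.sum_append, List.sum_nil]
  omega

lemma deltaN_eq_wordDist (ha : a ≤ b) {j t N : ℕ} (ht : t ≤ N * hseq b j) :
    deltaN b a j t N =
      (wordDist ((wordPow (Bword b a j) N).drop t) (wordPow (Bword b a j) N) + t) /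
        (N * hseq b j) := by
  have hlen : (wordPow (Bword b a j) N).length = N * hseq b j := by
    rw [length_wordPow, length_Bword ha]
  rw [deltaN, ← sum_dist_shift_eq _ (hlen ▸ ht) 0, hlen, Nat.cast_mul, one_div_mul_eq_div]
  rfl

lemma deltaN_hseq_le (hb : 2 ≤ b) (ha : a ≤ b) (k n : ℕ) {N : ℕ} (hN : 1 ≤ N) :
    deltaN b a (k + n) (hseq b k) N ≤
      (N * spacerCount b k n * (hseq b k + 1) + hseq b k) / (N * hseq b (k + n)) := by
  set u := wordPow (Bword b a (k + n)) N
  have hle : hseq b k ≤ N * hseq b (k + n) :=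
    (hseq_mono (by omega) (Nat.le_add_right k n)).trans (Nat.le_mul_of_pos_left _ hN)
  have hu : u.length = N * hseq b (k + n) := by rw [length_wordPow, length_Bword ha]
  rw [deltaN_eq_wordDist ha hle]
  gcongr
  calc wordDist (u.drop (hseq b k)) u
      ≤ wordDist u (Bword b a k ++ u) := by
        rw [← length_Bword ha] at hle ⊢
        exact wordDist_drop_le (hu ▸ hle)
    _ ≤ (N * spacerCount b k n : ℕ) * wordDist (1 :: Bword b a k) (Bword b a k ++ [1]) :=
        ((isBuiltFrom_Bword ha k n).pow N).wordDist_append_le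
    _ ≤ N * spacerCount b k n * (hseq b k + 1) := by
        push_cast
        gcongr
        exact wordDist_cons_Bword_le hb ha k

lemma le_of_tendsto_deltaN_hseq (hb : 2 ≤ b) (ha : a ≤ b) {k n : ℕ} {d : ℝ}
    (hd : Tendsto (deltaN b a (k + n) (hseq b k)) atTop (𝓝 d)) :
    d ≤ spacerCount b k n * (hseq b k + 1) / hseq b (k + n) := by
  set c : ℝ := spacerCount b k n * (hseq b k + 1) / hseq b (k + n)
  have hlim : Tendsto (fun N : ℕ => c + hseq b k / hseq b (k + n) / (N : ℝ)) atTop (𝓝 c) := by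
    simpa using tendsto_const_nhds.add
      (tendsto_const_div_atTop_nhds_zero_nat ((hseq b k : ℝ) / hseq b (k + n)))
  refine le_of_tendsto_of_tendsto hd hlim ?_
  filter_upwards [eventually_ge_atTop 1] with N hN
  refine (deltaN_hseq_le hb ha k n hN).trans_eq ?_
  have hN0 : (N : ℝ) ≠ 0 := by positivity
  have hh0 : (hseq b (k + n) : ℝ) ≠ 0 := by exact_mod_cast (hseq_pos b (k + n)).ne'
  simp only [c]
  field_simp

lemma spacerCount_div_hseq_le (hb : 2 ≤ b) (k n : ℕ) :
    (spacerCount b k (n + 1) : ℝ) / hseq b (k + (n + 1)) ≤ 4 / (3 * hseq b (k + 1)) := by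
  have hpos (j : ℕ) : (0 : ℝ) < hseq b j := by exact_mod_cast hseq_pos b j
  have hcount : (3 * spacerCount b k (n + 1) + 1 : ℝ) * hseq b (k + 1) ≤
      4 * hseq b (k + (n + 1)) := by exact_mod_cast spacerCount_mul_hseq_le hb k n
  rw [div_le_div_iff₀ (hpos _) (mul_pos three_pos (hpos _))]
  linarith [hpos (k + 1)]

lemma four_div_mul_hseq_add_one_lt (hb : 2 ≤ b) (k : ℕ) :
    4 / (3 * hseq b (k + 1)) * (hseq b k + 1 : ℝ) < 1 / 2 ^ k := by
  have hpow : 2 * 2 ^ k ≤ b ^ (k + 1) := pow_succ' 2 k ▸ Nat.pow_le_pow_left hb (k + 1)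
  have hsize : (2 : ℝ) ^ k ≤ hseq b k := by
    exact_mod_cast (Nat.pow_le_pow_left hb k).trans (pow_le_hseq b k)
  have hrec : (2 * 2 ^ k * hseq b k + 1 : ℝ) ≤ hseq b (k + 1) := by
    exact_mod_cast Nat.succ_le_succ (Nat.mul_le_mul_right (hseq b k) hpow)
  have hpos : (0 : ℝ) < hseq b (k + 1) := by exact_mod_cast hseq_pos b (k + 1)
  rw [div_mul_eq_mul_div, div_lt_div_iff₀ (by positivity) (by positivity)]
  calc 4 * (hseq b k + 1 : ℝ) * 2 ^ k
      < 3 * (2 * 2 ^ k * hseq b k + 1) := by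
        nlinarith [sq_nonneg ((2 : ℝ) ^ k - 1), mul_le_mul_of_nonneg_left hsize
          (by positivity : (0 : ℝ) ≤ 2 ^ k)]
    _ ≤ 1 * (3 * hseq b (k + 1)) := by linarith

theorem delta_hseq_lt_general (hb : 2 ≤ b) (ha : a ≤ b) (k : ℕ) {δk : ℕ → ℝ} {δ : ℝ}
    (hδk : ∀ᶠ j in atTop, Tendsto (deltaN b a j (hseq b k)) atTop (𝓝 (δk j)))
    (hδ : Tendsto δk atTop (𝓝 δ)) :
    δ < 1 / 2 ^ k := by
  refine lt_of_le_of_lt (le_of_tendsto hδ ?_) (four_div_mul_hseq_add_one_lt hb k)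
  filter_upwards [hδk, eventually_ge_atTop (k + 1)] with j hj hkj
  obtain ⟨n, rfl⟩ := Nat.exists_eq_add_of_le hkj
  rw [add_assoc, add_comm 1 n] at hj ⊢
  calc δk (k + (n + 1))
      ≤ spacerCount b k (n + 1) * (hseq b k + 1) / hseq b (k + (n + 1)) :=
        le_of_tendsto_deltaN_hseq hb ha hj
    _ = spacerCount b k (n + 1) / hseq b (k + (n + 1)) * (hseq b k + 1) := by ring
    _ ≤ 4 / (3 * hseq b (k + 1)) * (hseq b k + 1) :=
        mul_le_mul_of_nonneg_right (spacerCount_div_hseq_le hb k n) (by positivity)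

end Bword

/-- the limiting coding distance satisfies `δ(h k) < 1 / 2^k` for `k ≥ 1`. -/
theorem delta_hseq_lt (b a : ℕ) (hb : 2 ≤ b) (ha1 : 1 ≤ a) (ha2 : a ≤ b - 1)
    (δk : ℕ → ℕ → ℝ)
    (hδk : ∀ j ≥ 1, ∀ t ≥ 1, Tendsto (fun N => deltaN b a j t N) atTop (𝓝 (δk j t)))
    (δ : ℕ → ℝ) (hδ : ∀ t ≥ 1, Tendsto (fun j => δk j t) atTop (𝓝 (δ t)))
    (k : ℕ) (hk : 1 ≤ k) :
    δ (hseq b k) < 1 / 2 ^ k :=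
  delta_hseq_lt_general hb (by omega) k
    ((eventually_ge_atTop 1).mono fun j hj => hδk j hj _ (hseq_pos b k)) (hδ _ (hseq_pos b k))
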